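/- The emptiness problem for register set automata is decidable: the set of (encodings of) RsAs A with L(A) = ∅ is a computable (decidable) set. -/

import Mathlib

/-- A data word over the alphabet `Fin k`, with data domain `𝔻 = ℕ`. -/
abbrev DataWord (k : ℕ) : Type :=
  List (Fin k × ℕ)

/-- A transition of a (concretely encoded) register set automaton:
`(src, letter, gIn, gNin, upd, tgt)`.  Guards are lists of registers; the update is
a list indexed by register number, `none` standing for the current input `in` and
`some r` for register `r`. -/
structure CTrans (k : ℕ) where
  src : ℕ
  letter : Fin k
  gIn : List ℕ
  gNin : List ℕ
  upd : List (List (Option ℕ))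
  tgt : ℕ

instance (k : ℕ) : Primcodable (CTrans k) :=
  Primcodable.ofEquiv (ℕ × Fin k × List ℕ × List ℕ × List (List (Option ℕ)) × ℕ)
    { toFun := fun t => (t.src, t.letter, t.gIn, t.gNin, t.upd, t.tgt)
      invFun := fun p => ⟨p.1, p.2.1, p.2.2.1, p.2.2.2.1, p.2.2.2.2.1, p.2.2.2.2.2⟩
      left_inv := fun t => rfl
      right_inv := fun p => rfl }

/-- A (concretely encoded) register set automaton, whose states are `0, …, nQ - 1`
and registers are `0, …, nR - 1` (initial segments of `ℕ`). -/
structure CRsA (k : ℕ) where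
  nQ : ℕ
  nR : ℕ
  trans : List (CTrans k)
  I : List ℕ
  F : List ℕ

instance (k : ℕ) : Primcodable (CRsA k) :=
  Primcodable.ofEquiv (ℕ × ℕ × List (CTrans k) × List ℕ × List ℕ)
    { toFun := fun A => (A.nQ, A.nR, A.trans, A.I, A.F)
      invFun := fun p => ⟨p.1, p.2.1, p.2.2.1, p.2.2.2.1, p.2.2.2.2⟩
      left_inv := fun A => rfl
      right_inv := fun p => rfl }

/-- The register assignment obtained after taking transition `t` with current input
data value `d`, starting from the assignment `f`. -/
def CTrans.apply {k : ℕ} (t : CTrans k) (f : ℕ → Finset ℕ) (d : ℕ) :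
    ℕ → Finset ℕ := fun r =>
  ((t.upd.getD r []).map fun o =>
    match o with
    | none => ({d} : Finset ℕ)
    | some r' => f r').foldr (· ∪ ·) ∅

/-- One step of a `CRsA` from configuration `c` to configuration `c'`, reading
the letter `x`. -/
def CRsA.Step {k : ℕ} (A : CRsA k) (c : ℕ × (ℕ → Finset ℕ)) (x : Fin k × ℕ)
    (c' : ℕ × (ℕ → Finset ℕ)) : Prop :=
  ∃ t ∈ A.trans, t.src = c.1 ∧ t.letter = x.1 ∧
    (∀ r ∈ t.gIn, x.2 ∈ c.2 r) ∧ (∀ r ∈ t.gNin, x.2 ∉ c.2 r) ∧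
    c' = (t.tgt, t.apply c.2 x.2)

/-- Runs of a `CRsA`. -/
inductive CRsA.Run {k : ℕ} (A : CRsA k) :
    (ℕ × (ℕ → Finset ℕ)) → DataWord k → (ℕ × (ℕ → Finset ℕ)) → Prop where
  | nil (c : ℕ × (ℕ → Finset ℕ)) : CRsA.Run A c [] c
  | cons {c c' c'' : ℕ × (ℕ → Finset ℕ)} {x : Fin k × ℕ} {w : DataWord k} :
      A.Step c x c' → CRsA.Run A c' w c'' → CRsA.Run A c (x :: w) c''

/-- The language of a `CRsA`. -/
def CRsA.Lang {k : ℕ} (A : CRsA k) : Set (DataWord k) :=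
  { w | ∃ q₀ ∈ A.I, ∃ c : ℕ × (ℕ → Finset ℕ),
      A.Run (q₀, fun _ => ∅) w c ∧ c.1 ∈ A.F }

/-- Well-formedness of a `CRsA`: all states and registers mentioned lie in the
respective initial segments, the two guards of each transition are disjoint, and
the update is a function on the registers. -/
def CRsA.WellFormed {k : ℕ} (A : CRsA k) : Prop :=
  (∀ q ∈ A.I, q < A.nQ) ∧ (∀ q ∈ A.F, q < A.nQ) ∧
  ∀ t ∈ A.trans, t.src < A.nQ ∧ t.tgt < A.nQ ∧
    (∀ r ∈ t.gIn, r < A.nR) ∧ (∀ r ∈ t.gNin, r < A.nR) ∧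
    (∀ r ∈ t.gIn, r ∉ t.gNin) ∧
    t.upd.length = A.nR ∧
    ∀ l ∈ t.upd, ∀ r' : ℕ, some r' ∈ l → r' < A.nR

/-!
A run inspects only the data values of the word it reads, and these only up to injective renaming.
So if `f` embeds into `f'` through an injection of `𝔻` preserving membership in all registers,
every word accepted from `(q, f)` can be renamed into one accepted from `(q, f')`. As there are
finitely many membership types, Dickson's lemma makes this a well-quasi-order, and hence the
increasing sequence of the sets `U n` of configurations accepting some word of length at most `n`
stabilises; moreover `U (n + 1) ⊆ U n` already forces `U m ⊆ U n` for all `m`. Up to renaming, a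
word of length `n` involves at most `n` data values, so this inclusion is a finite test. The
algorithm searches for an `n` passing the test and then checks whether an initial configuration
lies in `U n`.
-/

section WellQuasiOrder

open Cardinal

universe u v

theorem exists_embedding_comp_eq_of_mk_fiber_le {α β : Type u} {γ : Type v} {f : α → γ}
    {g : β → γ} (h : ∀ c, #{a // f a = c} ≤ #{b // g b = c}) : ∃ σ : α ↪ β, g ∘ σ = f := by
  obtain ⟨e⟩ := Classical.nonempty_pi.2 fun c => (Cardinal.le_def _ _).1 (h c)
  refine ⟨((Equiv.sigmaFiberEquiv f).symm.toEmbedding.trans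
    (Function.Embedding.sigmaMap (.refl γ) e)).trans (Equiv.sigmaFiberEquiv g).toEmbedding, ?_⟩
  funext a
  exact (e (f a) ⟨a, rfl⟩).2

theorem wellQuasiOrdered_exists_embedding_comp_eq (α : Type u) (γ : Type v) [Finite γ] :
    WellQuasiOrdered fun f g : α → γ => ∃ σ : α ↪ α, g ∘ σ = f := by
  intro s
  obtain ⟨i, j, hij, h⟩ := wellQuasiOrdered_le fun n (c : γ) => #{a // s n a = c}
  exact ⟨i, j, hij, exists_embedding_comp_eq_of_mk_fiber_le h⟩

theorem exists_succ_subset_of_wellQuasiOrdered {α : Type*} {r : α → α → Prop}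
    (hr : WellQuasiOrdered r) {U : ℕ → Set α} (hU : Monotone U)
    (hUr : ∀ n a b, r a b → a ∈ U n → b ∈ U n) : ∃ n, U (n + 1) ⊆ U n := by
  by_contra! h
  choose a ha ha' using fun n => Set.not_subset.1 (h n)
  obtain ⟨i, j, hij, hr⟩ := hr a
  exact ha' j (hUr j _ _ hr (hU hij (ha i)))

end WellQuasiOrder

theorem exists_perm_forall_lt (m : ℕ) (D : Finset ℕ) :
    ∃ ρ : Equiv.Perm ℕ, (∀ d < m, ρ d = d) ∧ ∀ d ∈ D, ρ d < m + D.card := by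
  induction D using Finset.induction_on with
  | empty => exact ⟨1, by simp⟩
  | insert a D ha ih =>
    obtain ⟨ρ, hfix, hlt⟩ := ih
    rw [Finset.card_insert_of_notMem ha]
    by_cases hρa : ρ a < m + D.card
    · refine ⟨ρ, hfix, fun d hd => ?_⟩
      rcases Finset.mem_insert.1 hd with rfl | hd
      · omega
      · have := hlt d hd
        omega
    · refine ⟨ρ.trans (Equiv.swap (ρ a) (m + D.card)), fun d hd => ?_, fun d hd => ?_⟩
      · rw [Equiv.trans_apply, hfix d hd, Equiv.swap_apply_of_ne_of_ne] <;> omega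
      · rcases Finset.mem_insert.1 hd with rfl | hd
        · rw [Equiv.trans_apply, Equiv.swap_apply_left]
          omega
        · have := hlt d hd
          rw [Equiv.trans_apply, Equiv.swap_apply_of_ne_of_ne] <;> omega

section Computability

open Primrec

variable {α β : Type*} [Primcodable α] [Primcodable β]

theorem primrecPred_forall_mem {f : α → List β} {R : α → β → Prop} (hf : Primrec f)
    (hR : PrimrecRel R) : PrimrecPred fun a => ∀ b ∈ f a, R a b :=
  (PrimrecRel.forall_mem_list hR.swap).comp hf Primrec.id

theorem primrecPred_exists_mem {f : α → List β} {R : α → β → Prop} (hf : Primrec f)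
    (hR : PrimrecRel R) : PrimrecPred fun a => ∃ b ∈ f a, R a b :=
  (PrimrecRel.exists_mem_list hR.swap).comp hf Primrec.id

theorem primrecPred_mem {f : α → β} {g : α → List β} (hf : Primrec f) (hg : Primrec g) :
    PrimrecPred fun a => f a ∈ g a :=
  (primrecPred_exists_mem (R := fun a b => b = f a) hg
    (Primrec.eq.comp₂ Primrec₂.right (hf.comp₂ Primrec₂.left))).of_eq fun a => by
      rw [exists_eq_right]

theorem primrec_sublists' : Primrec (List.sublists' : List α → List (List α)) := by
  have hstep : Primrec₂ fun (_ : List α) (p : α × List (List α)) => p.2 ++ p.2.map (p.1 :: ·) :=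
    list_append.comp (snd.comp snd) <| list_map (snd.comp snd) <|
      list_cons.comp (fst.comp (snd.comp fst)) snd
  refine (list_foldr .id (const [[]]) hstep).of_eq fun l => ?_
  induction l with
  | nil => rfl
  | cons a l ih => rw [List.sublists'_cons, ← ih]; rfl

theorem primrec_sections : Primrec (List.sections : List (List α) → List (List α)) := by
  have hstep : Primrec₂ fun (_ : List (List α)) (p : List α × List (List α)) =>
      p.2.flatMap fun s => p.1.map (· :: s) :=
    list_flatMap (snd.comp snd) <| list_map (fst.comp (snd.comp fst)) <|
      list_cons.comp snd (snd.comp fst)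
  refine (list_foldr .id (const [[]]) hstep).of_eq fun L => ?_
  induction L with
  | nil => rfl
  | cons l L ih => rw [List.sections, ← ih]; rfl

theorem rePred_exists_of_primrecRel {R : α → ℕ → Prop} (hR : PrimrecRel R) :
    REPred fun a => ∃ n, R a n := by
  classical
  have hdec : Computable₂ fun a n => decide (R a n) := hR.decide.to_comp
  refine (Partrec.rfind hdec.partrec₂).dom_re.of_eq fun a => ?_
  simp [Nat.rfind_dom]

theorem computablePred_of_primrecRel_search {p : α → Prop} {S R : α → ℕ → Prop}
    (hS : PrimrecRel S) (hR : PrimrecRel R) (hex : ∀ a, ∃ n, S a n)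
    (hp : ∀ a n, S a n → (p a ↔ R a n)) : ComputablePred p := by
  refine ComputablePred.computable_iff_re_compl_re'.2
    ⟨(rePred_exists_of_primrecRel (R := fun a n => S a n ∧ R a n) (hS.and hR)).of_eq fun a => ?_,
      (rePred_exists_of_primrecRel (R := fun a n => S a n ∧ ¬ R a n)
        (hS.and hR.not)).of_eq fun a => ?_⟩ <;>
    obtain ⟨m, hm⟩ := hex a
  · exact ⟨fun ⟨n, hn, h⟩ => (hp a n hn).2 h, fun h => ⟨m, hm, (hp a m hm).1 h⟩⟩
  · exact ⟨fun ⟨n, hn, h⟩ => mt (hp a n hn).1 h, fun h => ⟨m, hm, mt (hp a m hm).2 h⟩⟩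

end Computability

/-! ### Acceptance is invariant under renaming data values -/

/-- `Embeds N f f'` is the quasi-order on register assignments along which acceptance is inherited:
some injective renaming of the data domain preserves and reflects membership in the registers
below `N`. -/
def Embeds (N : ℕ) (f f' : ℕ → Finset ℕ) : Prop :=
  ∃ σ : ℕ ↪ ℕ, ∀ d, ∀ r < N, d ∈ f r ↔ σ d ∈ f' r

namespace Embeds

variable {N : ℕ} {f f' f'' : ℕ → Finset ℕ}

theorem of_forall_eq (h : ∀ r < N, f r = f' r) : Embeds N f f' :=
  ⟨.refl ℕ, fun _ r hr => h r hr ▸ Iff.rfl⟩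

theorem trans : Embeds N f f' → Embeds N f' f'' → Embeds N f f'' := by
  rintro ⟨σ, hσ⟩ ⟨τ, hτ⟩
  exact ⟨σ.trans τ, fun d r hr => (hσ d r hr).trans (hτ (σ d) r hr)⟩

theorem inter_left (N : ℕ) (f : ℕ → Finset ℕ) (D : Finset ℕ) : Embeds N (fun r => f r ∩ D) f := by
  obtain ⟨M, hM⟩ := (D ∪ (Finset.range N).biUnion f).bddAbove
  have hD : ∀ d ∈ D, d ≤ M := fun d hd => hM (by simp [hd])
  have hf : ∀ r < N, ∀ d ∈ f r, d ≤ M := fun r hr d hd =>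
    hM (Finset.mem_union_right _ (Finset.mem_biUnion.2 ⟨r, Finset.mem_range.2 hr, hd⟩))
  -- Values outside `D` lie in no register of `f ∩ D`, so they must avoid all registers of `f`.
  let σ : ℕ → ℕ := fun d => if d ∈ D then d else d + (M + 1)
  have hσ : Function.Injective σ := by
    intro d e hde
    simp only [σ] at hde
    split_ifs at hde with hd he he
    · exact hde
    · have := hD d hd
      omega
    · have := hD e he
      omega
    · omega
  refine ⟨⟨σ, hσ⟩, fun d r hr => ?_⟩
  change d ∈ f r ∩ D ↔ σ d ∈ f r
  by_cases hd : d ∈ D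
  · simp [σ, hd]
  · have : d + (M + 1) ∉ f r := fun h => by have := hf r hr _ h; omega
    simp [σ, hd, this]

theorem map (N : ℕ) (f : ℕ → Finset ℕ) (σ : ℕ ↪ ℕ) : Embeds N f fun r => (f r).map σ :=
  ⟨σ, fun _ _ _ => (Finset.mem_map' σ).symm⟩

theorem map_perm (N : ℕ) (f : ℕ → Finset ℕ) (ρ : Equiv.Perm ℕ) :
    Embeds N (fun r => (f r).map ρ.toEmbedding) f :=
  ⟨ρ.symm.toEmbedding, fun _ _ _ => Finset.mem_map_equiv⟩

end Embeds

theorem wellQuasiOrdered_embeds (N : ℕ) : WellQuasiOrdered (Embeds N) := by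
  intro s
  obtain ⟨i, j, hij, σ, hσ⟩ := wellQuasiOrdered_exists_embedding_comp_eq ℕ (Set (Fin N))
    fun n d => {r | d ∈ s n r}
  refine ⟨i, j, hij, σ, fun d r hr => ?_⟩
  exact (Set.ext_iff.1 (congrFun hσ d) ⟨r, hr⟩).symm

variable {k : ℕ}

theorem CTrans.mem_apply {t : CTrans k} {f : ℕ → Finset ℕ} {d e r : ℕ} :
    e ∈ t.apply f d r ↔ ∃ o ∈ t.upd.getD r [], o.elim (e = d) (e ∈ f ·) := by
  unfold CTrans.apply
  induction t.upd.getD r [] with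
  | nil => simp
  | cons o l ih =>
    simp only [List.map_cons, List.foldr_cons, Finset.mem_union, ih, List.mem_cons,
      exists_eq_or_imp]
    cases o <;> simp

namespace CRsA

variable {A : CRsA k}

theorem WellFormed.lt_of_some_mem_upd (hA : A.WellFormed) {t : CTrans k} (ht : t ∈ A.trans)
    {r r' : ℕ} (h : some r' ∈ t.upd.getD r []) : r' < A.nR := by
  obtain ⟨-, -, -, -, -, -, hupd⟩ := hA.2.2 t ht
  by_cases hr : r < t.upd.length
  · rw [List.getD_eq_getElem _ _ hr] at h
    exact hupd _ (List.getElem_mem hr) r' h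
  · rw [List.getD_eq_default _ _ (not_lt.1 hr)] at h
    exact absurd h List.not_mem_nil

theorem WellFormed.mem_apply_iff_rename (hA : A.WellFormed) {t : CTrans k} (ht : t ∈ A.trans)
    (σ : ℕ ↪ ℕ) {f f' : ℕ → Finset ℕ} {e : ℕ} (he : ∀ r < A.nR, e ∈ f r ↔ σ e ∈ f' r) (d r : ℕ) :
    e ∈ t.apply f d r ↔ σ e ∈ t.apply f' (σ d) r := by
  simp only [CTrans.mem_apply]
  refine exists_congr fun o => and_congr_right fun ho => ?_
  cases o with
  | none => exact σ.injective.eq_iff.symm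
  | some r' => exact he r' (hA.lt_of_some_mem_upd ht ho)

/-- The automaton has an accepting run on `w` starting in the configuration `c`. -/
def Accepts (A : CRsA k) (c : ℕ × (ℕ → Finset ℕ)) (w : DataWord k) : Prop :=
  ∃ c', A.Run c w c' ∧ c'.1 ∈ A.F

theorem accepts_nil {c : ℕ × (ℕ → Finset ℕ)} : A.Accepts c [] ↔ c.1 ∈ A.F :=
  ⟨fun ⟨_, .nil _, hF⟩ => hF, fun hF => ⟨c, .nil c, hF⟩⟩

theorem accepts_cons {c : ℕ × (ℕ → Finset ℕ)} {x : Fin k × ℕ} {w : DataWord k} :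
    A.Accepts c (x :: w) ↔ ∃ c', A.Step c x c' ∧ A.Accepts c' w :=
  ⟨fun ⟨c'', .cons hs hr, hF⟩ => ⟨_, hs, c'', hr, hF⟩,
    fun ⟨_, hs, c'', hr, hF⟩ => ⟨c'', .cons hs hr, hF⟩⟩

theorem Accepts.rename (hA : A.WellFormed) (σ : ℕ ↪ ℕ) {w : DataWord k} {q : ℕ}
    {f f' : ℕ → Finset ℕ} (hσ : ∀ x ∈ w, ∀ r < A.nR, x.2 ∈ f r ↔ σ x.2 ∈ f' r)
    (h : A.Accepts (q, f) w) : A.Accepts (q, f') (w.map (Prod.map id σ)) := by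
  induction w generalizing q f f' with
  | nil =>
    have hq : q ∈ A.F := accepts_nil.1 h
    exact accepts_nil.2 hq
  | cons x w ih =>
    obtain ⟨_, ⟨t, ht, hsrc, hletter, hin, hnin, rfl⟩, h⟩ := accepts_cons.1 h
    obtain ⟨hx, hw⟩ := List.forall_mem_cons.1 hσ
    obtain ⟨-, -, hgIn, hgNin, -⟩ := hA.2.2 t ht
    refine accepts_cons.2 ⟨(t.tgt, t.apply f' (σ x.2)), ⟨t, ht, hsrc, hletter,
      fun r hr => (hx r (hgIn r hr)).1 (hin r hr),
      fun r hr => mt (hx r (hgNin r hr)).2 (hnin r hr), rfl⟩, ?_⟩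
    exact ih (fun y hy r _ => hA.mem_apply_iff_rename ht σ (hw y hy) x.2 r) h

theorem Accepts.exists_data_lt (hA : A.WellFormed) {q m : ℕ} {f : ℕ → Finset ℕ} {w : DataWord k}
    (hf : ∀ r < A.nR, f r ⊆ Finset.range m) (h : A.Accepts (q, f) w) :
    ∃ w', w'.length = w.length ∧ (∀ x ∈ w', x.2 < m + w.length) ∧ A.Accepts (q, f) w' := by
  obtain ⟨ρ, hfix, hlt⟩ := exists_perm_forall_lt m (w.map Prod.snd).toFinset
  have hcard : (w.map Prod.snd).toFinset.card ≤ w.length :=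
    (List.toFinset_card_le _).trans_eq (List.length_map _)
  have hρ : ∀ d, ∀ r < A.nR, d ∈ f r ↔ ρ d ∈ f r := by
    intro d r hr
    by_cases hd : d < m
    · rw [hfix d hd]
    · have hρd : ¬ ρ d < m := fun hlt => hd (ρ.injective (hfix _ hlt) ▸ hlt)
      exact iff_of_false (fun h => hd (Finset.mem_range.1 (hf r hr h)))
        fun h => hρd (Finset.mem_range.1 (hf r hr h))
  refine ⟨_, List.length_map _, ?_, h.rename hA ρ.toEmbedding fun x _ => hρ x.2⟩
  rintro _ hx
  obtain ⟨x, hxw, rfl⟩ := List.mem_map.1 hx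
  have hxD : x.2 ∈ (w.map Prod.snd).toFinset := List.mem_toFinset.2 (List.mem_map_of_mem hxw)
  exact (hlt x.2 hxD).trans_le (by omega)

/-- The automaton accepts some word of length at most `n` starting in `c`: the `n`-th stage of
backward reachability from the final states. -/
def AcceptsWithin (A : CRsA k) (n : ℕ) (c : ℕ × (ℕ → Finset ℕ)) : Prop :=
  ∃ w : DataWord k, w.length ≤ n ∧ A.Accepts c w

theorem AcceptsWithin.mono {m n : ℕ} (hmn : m ≤ n) {c : ℕ × (ℕ → Finset ℕ)} :
    A.AcceptsWithin m c → A.AcceptsWithin n c :=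
  fun ⟨w, hw, h⟩ => ⟨w, hw.trans hmn, h⟩

theorem AcceptsWithin.of_embeds (hA : A.WellFormed) {n q : ℕ} {f f' : ℕ → Finset ℕ}
    (hff' : Embeds A.nR f f') : A.AcceptsWithin n (q, f) → A.AcceptsWithin n (q, f') := by
  obtain ⟨σ, hσ⟩ := hff'
  rintro ⟨w, hw, h⟩
  exact ⟨_, by rwa [List.length_map], h.rename hA σ fun x _ => hσ x.2⟩

theorem AcceptsWithin.exists_embeds (hA : A.WellFormed) {n q : ℕ} {f : ℕ → Finset ℕ}
    (h : A.AcceptsWithin n (q, f)) : ∃ f₀ : ℕ → Finset ℕ,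
      (∀ r, f₀ r ⊆ Finset.range n) ∧ Embeds A.nR f₀ f ∧ A.AcceptsWithin n (q, f₀) := by
  obtain ⟨w, hw, h⟩ := h
  let D := (w.map Prod.snd).toFinset
  have hD : D.card ≤ n := ((List.toFinset_card_le _).trans_eq (List.length_map _)).trans hw
  obtain ⟨ρ, -, hρ⟩ := exists_perm_forall_lt 0 D
  have hinter : A.AcceptsWithin n (q, fun r => f r ∩ D) := by
    refine ⟨w, hw, ?_⟩
    have hmem : ∀ x ∈ w, ∀ r < A.nR, x.2 ∈ f r ↔ x.2 ∈ f r ∩ D := fun x hx r _ => by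
      simpa [D] using fun _ => ⟨x.1, hx⟩
    have hid : w.map (Prod.map id (Function.Embedding.refl ℕ)) = w := List.map_id w
    exact hid ▸ h.rename hA (.refl ℕ) hmem
  refine ⟨fun r => (f r ∩ D).map ρ.toEmbedding, fun r d hd => ?_,
    (Embeds.map_perm _ _ ρ).trans (Embeds.inter_left _ _ _), hinter.of_embeds hA (Embeds.map _ _ _)⟩
  obtain ⟨e, he, rfl⟩ := Finset.mem_map.1 hd
  have := hρ e (Finset.mem_inter.1 he).2
  exact Finset.mem_range.2 (by simpa using this.trans_le (by omega))

/-- Backward reachability has stabilised after `n` stages. -/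
def Stable (A : CRsA k) (n : ℕ) : Prop :=
  ∀ q < A.nQ, ∀ f, A.AcceptsWithin (n + 1) (q, f) → A.AcceptsWithin n (q, f)

theorem exists_stable (hA : A.WellFormed) : ∃ n, A.Stable n := by
  let U : ℕ → Set (Fin A.nQ × (ℕ → Finset ℕ)) := fun n => {c | A.AcceptsWithin n (c.1, c.2)}
  have hwqo := (Finite.wellQuasiOrdered fun p q : Fin A.nQ => p = q).prod
    (wellQuasiOrdered_embeds A.nR)
  have hU : Monotone U := fun _ _ hmn _ hc => hc.mono hmn
  obtain ⟨n, hn⟩ := exists_succ_subset_of_wellQuasiOrdered hwqo hU (by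
    rintro n ⟨q, f⟩ ⟨_, f'⟩ ⟨rfl, hff'⟩ hc
    exact hc.of_embeds hA hff')
  exact ⟨n, fun q hq f hf => hn (a := (⟨q, hq⟩, f)) hf⟩

theorem Stable.acceptsWithin (hA : A.WellFormed) {n : ℕ} (hn : A.Stable n) {w : DataWord k} {q : ℕ}
    (hq : q < A.nQ) {f : ℕ → Finset ℕ} (h : A.Accepts (q, f) w) : A.AcceptsWithin n (q, f) := by
  induction w generalizing q f with
  | nil => exact ⟨[], n.zero_le, h⟩
  | cons x w ih =>
    obtain ⟨c', hs, h⟩ := accepts_cons.1 h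
    have ⟨t, ht, _, _, _, _, hc'⟩ := hs
    subst hc'
    obtain ⟨w', hw', h'⟩ := ih (hA.2.2 t ht).2.1 h
    exact hn q hq f ⟨x :: w', Nat.succ_le_succ hw', accepts_cons.2 ⟨_, hs, h'⟩⟩

theorem Stable.lang_eq_empty_iff (hA : A.WellFormed) {n : ℕ} (hn : A.Stable n) :
    A.Lang = ∅ ↔ ∀ q ∈ A.I, ¬ A.AcceptsWithin n (q, fun _ => ∅) := by
  rw [Set.eq_empty_iff_forall_notMem]
  constructor
  · rintro h q hq ⟨w, -, hw⟩
    exact h w ⟨q, hq, hw⟩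
  · rintro h w ⟨q, hq, hw⟩
    exact h q hq (hn.acceptsWithin hA (hA.1 q hq) hw)

end CRsA

/-! ### The algorithm -/

/-- The register assignment coded by the list of the contents of registers `0, 1, …`; registers
beyond the end of the list are empty. -/
def toAssignment (l : List (List ℕ)) : ℕ → Finset ℕ :=
  fun r => (l.getD r []).toFinset

/-- The configuration coded by a state and a list of register contents. -/
def toConfig (c : ℕ × List (List ℕ)) : ℕ × (ℕ → Finset ℕ) :=
  (c.1, toAssignment c.2)

/-- The codes of all assignments of subsets of `{0, …, n - 1}` to the registers below `N`. -/
def assignments (N n : ℕ) : List (List (List ℕ)) :=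
  ((List.range N).map fun _ => (List.range n).sublists').sections

theorem toAssignment_subset_of_mem_assignments {N n : ℕ} {l : List (List ℕ)}
    (hl : l ∈ assignments N n) (r : ℕ) : toAssignment l r ⊆ Finset.range n := by
  intro d hd
  have hd : d ∈ l.getD r [] := List.mem_toFinset.1 hd
  have hl := List.forall₂_map_right_iff.1 (List.mem_sections.1 hl)
  by_cases hr : r < l.length
  · rw [List.getD_eq_getElem _ _ hr] at hd
    have hsub := List.mem_sublists'.1 (hl.get hr (hl.length_eq ▸ hr))
    exact Finset.mem_range.2 (List.mem_range.1 (hsub.subset hd))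
  · rw [List.getD_eq_default _ _ (not_lt.1 hr)] at hd
    exact absurd hd List.not_mem_nil

theorem exists_mem_assignments {N n : ℕ} {f : ℕ → Finset ℕ}
    (hf : ∀ r < N, f r ⊆ Finset.range n) :
    ∃ l ∈ assignments N n, ∀ r < N, toAssignment l r = f r := by
  refine ⟨(List.range N).map fun r => (List.range n).filter (· ∈ f r), ?_, fun r hr => ?_⟩
  · rw [assignments, List.mem_sections, List.forall₂_map_left_iff, List.forall₂_map_right_iff,
      List.forall₂_same]
    exact fun r _ => List.mem_sublists'.2 List.filter_sublist
  · ext d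
    have : d ∈ f r → d < n := fun hd => Finset.mem_range.1 (hf r hr hd)
    simpa [toAssignment, hr] using this

namespace CTrans

/-- The transition update on coded register assignments. -/
def applyList (t : CTrans k) (l : List (List ℕ)) (d : ℕ) : List (List ℕ) :=
  t.upd.map fun os => os.flatMap fun o => o.elim [d] fun r => l.getD r []

theorem toAssignment_applyList (t : CTrans k) (l : List (List ℕ)) (d : ℕ) :
    toAssignment (t.applyList l d) = t.apply (toAssignment l) d := by
  funext r
  ext e
  have hget : (t.applyList l d).getD r [] =
      (t.upd.getD r []).flatMap fun o => o.elim [d] fun r => l.getD r [] := List.getD_map _ [] _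
  rw [mem_apply, toAssignment, List.mem_toFinset, hget, List.mem_flatMap]
  refine exists_congr fun o => and_congr_right fun _ => ?_
  cases o with
  | none => exact List.mem_singleton
  | some r => exact List.mem_toFinset.symm

/-- The transition can fire in the coded configuration `c` on the data value `d`. -/
def Enabled (t : CTrans k) (c : ℕ × List (List ℕ)) (d : ℕ) : Prop :=
  t.src = c.1 ∧ (∀ r ∈ t.gIn, d ∈ toAssignment c.2 r) ∧ ∀ r ∈ t.gNin, d ∉ toAssignment c.2 r

instance (t : CTrans k) (c : ℕ × List (List ℕ)) (d : ℕ) : Decidable (t.Enabled c d) :=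
  inferInstanceAs (Decidable (_ ∧ _ ∧ _))

end CTrans

namespace CRsA

variable {A : CRsA k}

/-- The successors of a coded configuration on data values below `N`. -/
def post (A : CRsA k) (N : ℕ) (c : ℕ × List (List ℕ)) : List (ℕ × List (List ℕ)) :=
  A.trans.flatMap fun t => (List.range N).flatMap fun d =>
    if t.Enabled c d then [(t.tgt, t.applyList c.2 d)] else []

theorem mem_post {N : ℕ} {c c' : ℕ × List (List ℕ)} : c' ∈ A.post N c ↔
    ∃ t ∈ A.trans, ∃ d < N, t.Enabled c d ∧ c' = (t.tgt, t.applyList c.2 d) := by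
  simp only [post, List.mem_flatMap, List.mem_range, List.mem_ite_nil_right, List.mem_singleton]

theorem exists_mem_post_iff {N : ℕ} {c : ℕ × List (List ℕ)} {p : ℕ × (ℕ → Finset ℕ) → Prop} :
    (∃ c' ∈ A.post N c, p (toConfig c')) ↔
      ∃ x : Fin k × ℕ, x.2 < N ∧ ∃ c', A.Step (toConfig c) x c' ∧ p c' := by
  have key : ∀ (t : CTrans k) (d : ℕ),
      toConfig (t.tgt, t.applyList c.2 d) = (t.tgt, t.apply (toAssignment c.2) d) :=
    fun t d => congrArg _ (t.toAssignment_applyList c.2 d)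
  constructor
  · rintro ⟨_, hc', hp⟩
    obtain ⟨t, ht, d, hd, ⟨hsrc, hin, hnin⟩, rfl⟩ := mem_post.1 hc'
    exact ⟨(t.letter, d), hd, _, ⟨t, ht, hsrc, rfl, hin, hnin, key t d⟩, hp⟩
  · rintro ⟨⟨a, d⟩, hd, _, ⟨t, ht, hsrc, -, hin, hnin, rfl⟩, hp⟩
    refine ⟨_, mem_post.2 ⟨t, ht, d, hd, ⟨hsrc, hin, hnin⟩, rfl⟩, ?_⟩
    rwa [key]

/-- One stage of forward search on coded configurations, over data values below `N`. -/
def explore (A : CRsA k) (N : ℕ) (cs : List (ℕ × List (List ℕ))) : List (ℕ × List (List ℕ)) :=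
  cs ++ cs.flatMap (A.post N)

theorem exists_mem_iterate_explore_iff {N n : ℕ} {cs : List (ℕ × List (List ℕ))} :
    (∃ c ∈ (A.explore N)^[n] cs, c.1 ∈ A.F) ↔
      ∃ c ∈ cs, ∃ w : DataWord k,
        w.length ≤ n ∧ (∀ x ∈ w, x.2 < N) ∧ A.Accepts (toConfig c) w := by
  induction n generalizing cs with
  | zero =>
    simp [accepts_nil, toConfig]
  | succ n ih =>
    rw [Function.iterate_succ_apply, ih]
    constructor
    · rintro ⟨c', hc', w, hw, hN, h⟩
      rcases List.mem_append.1 hc' with hc' | hc'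
      · exact ⟨c', hc', w, hw.trans n.le_succ, hN, h⟩
      · obtain ⟨c, hc, hc'⟩ := List.mem_flatMap.1 hc'
        obtain ⟨x, hx, c'', hs, h⟩ :=
          exists_mem_post_iff (p := fun c' => A.Accepts c' w) |>.1 ⟨c', hc', h⟩
        exact ⟨c, hc, x :: w, Nat.succ_le_succ hw, List.forall_mem_cons.2 ⟨hx, hN⟩,
          accepts_cons.2 ⟨c'', hs, h⟩⟩
    · rintro ⟨c, hc, _ | ⟨x, w⟩, hw, hN, h⟩
      · exact ⟨c, List.mem_append_left _ hc, [], n.zero_le, hN, h⟩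
      · obtain ⟨hx, hN⟩ := List.forall_mem_cons.1 hN
        obtain ⟨c', hc', h⟩ := exists_mem_post_iff (p := fun c' => A.Accepts c' w) |>.2
          ⟨x, hx, accepts_cons.1 h⟩
        exact ⟨c', List.mem_append_right _ (List.mem_flatMap.2 ⟨c, hc, hc'⟩), w,
          Nat.le_of_succ_le_succ hw, hN, h⟩

/-- The executable form of `AcceptsWithin`, searching only words with data values below `N`. -/
def AcceptsTest (A : CRsA k) (N n : ℕ) (c : ℕ × List (List ℕ)) : Prop :=
  ∃ c' ∈ (A.explore N)^[n] [c], c'.1 ∈ A.F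

theorem acceptsTest_iff (hA : A.WellFormed) {m n N : ℕ} (hN : m + n ≤ N)
    {c : ℕ × List (List ℕ)} (hc : ∀ r < A.nR, toAssignment c.2 r ⊆ Finset.range m) :
    A.AcceptsTest N n c ↔ A.AcceptsWithin n (toConfig c) := by
  rw [AcceptsTest, exists_mem_iterate_explore_iff]
  simp only [List.mem_singleton, exists_eq_left]
  constructor
  · rintro ⟨w, hw, -, h⟩
    exact ⟨w, hw, h⟩
  · rintro ⟨w, hw, h⟩
    obtain ⟨w', hlen, hlt, h⟩ := h.exists_data_lt hA hc
    exact ⟨w', hlen.trans_le hw, fun x hx => (hlt x hx).trans_le (by omega), h⟩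

/-- The executable form of `Stable`.  Words of length at most `n + 1` need `n + 1` data values
besides those already stored in the registers. -/
def StableTest (A : CRsA k) (n : ℕ) : Prop :=
  ∀ q ∈ List.range A.nQ, ∀ l ∈ assignments A.nR (n + 1),
    A.AcceptsTest (2 * (n + 1)) (n + 1) (q, l) → A.AcceptsTest (2 * (n + 1)) n (q, l)

theorem stableTest_iff (hA : A.WellFormed) {n : ℕ} : A.StableTest n ↔ A.Stable n := by
  have htest : ∀ q, ∀ l ∈ assignments A.nR (n + 1), ∀ i ≤ n + 1,
      (A.AcceptsTest (2 * (n + 1)) i (q, l) ↔ A.AcceptsWithin i (q, toAssignment l)) :=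
    fun q l hl i hi => acceptsTest_iff hA (m := n + 1) (by omega) fun r _ =>
      toAssignment_subset_of_mem_assignments hl r
  constructor
  · intro h q hq f hf
    obtain ⟨f₀, hf₀, hf₀f, hacc⟩ := hf.exists_embeds hA
    obtain ⟨l, hl, hlf₀⟩ := exists_mem_assignments (N := A.nR) fun r _ => hf₀ r
    have hacc : A.AcceptsWithin (n + 1) (q, toAssignment l) :=
      hacc.of_embeds hA (.of_forall_eq fun r hr => (hlf₀ r hr).symm)
    have hacc : A.AcceptsWithin n (q, toAssignment l) :=
      (htest q l hl n n.le_succ).1 <|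
        h q (List.mem_range.2 hq) l hl ((htest q l hl (n + 1) le_rfl).2 hacc)
    exact hacc.of_embeds hA ((Embeds.of_forall_eq hlf₀).trans hf₀f)
  · intro h q hq l hl hacc
    exact (htest q l hl n n.le_succ).2 <|
      h q (List.mem_range.1 hq) _ ((htest q l hl (n + 1) le_rfl).1 hacc)

/-- The executable form of the test whether some initial configuration accepts a word of length
at most `n`. -/
def InitialTest (A : CRsA k) (n : ℕ) : Prop :=
  ∃ q ∈ A.I, A.AcceptsTest n n (q, [])

theorem initialTest_iff (hA : A.WellFormed) {n : ℕ} :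
    A.InitialTest n ↔ ∃ q ∈ A.I, A.AcceptsWithin n (q, fun _ => ∅) :=
  exists_congr fun q => and_congr_right fun _ =>
    acceptsTest_iff hA (m := 0) (c := (q, [])) (zero_add n).le fun _ _ => subset_rfl

end CRsA

/-! ### Primitive recursiveness of the algorithm -/

section PrimitiveRecursion

open Primrec

variable {α : Type*} [Primcodable α]

theorem primrec_assignments {N n : α → ℕ} (hN : Primrec N) (hn : Primrec n) :
    Primrec fun a => assignments (N a) (n a) :=
  primrec_sections.comp <| list_map (list_range.comp hN) <|
    (primrec_sublists'.comp (list_range.comp hn)).comp₂ Primrec₂.left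

theorem primrecPred_mem_toAssignment {d r : α → ℕ} {l : α → List (List ℕ)} (hd : Primrec d)
    (hl : Primrec l) (hr : Primrec r) : PrimrecPred fun a => d a ∈ toAssignment (l a) (r a) :=
  (primrecPred_mem hd ((list_getD []).comp hl hr)).of_eq fun _ => List.mem_toFinset.symm

namespace CTrans

theorem primrec_toProd :
    Primrec fun t : CTrans k => (t.src, t.letter, t.gIn, t.gNin, t.upd, t.tgt) :=
  of_equiv (α := ℕ × Fin k × List ℕ × List ℕ × List (List (Option ℕ)) × ℕ)

theorem primrec_src : Primrec (src (k := k)) :=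
  fst.comp primrec_toProd

theorem primrec_gIn : Primrec (gIn (k := k)) :=
  (fst.comp (snd.comp snd)).comp primrec_toProd

theorem primrec_gNin : Primrec (gNin (k := k)) :=
  (fst.comp (snd.comp (snd.comp snd))).comp primrec_toProd

theorem primrec_upd : Primrec (upd (k := k)) :=
  (fst.comp (snd.comp (snd.comp (snd.comp snd)))).comp primrec_toProd

theorem primrec_tgt : Primrec (tgt (k := k)) :=
  (snd.comp (snd.comp (snd.comp (snd.comp snd)))).comp primrec_toProd

theorem primrec_applyList {t : α → CTrans k} {l : α → List (List ℕ)} {d : α → ℕ}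
    (ht : Primrec t) (hl : Primrec l) (hd : Primrec d) :
    Primrec fun a => (t a).applyList (l a) (d a) := by
  refine list_map (primrec_upd.comp ht) (list_flatMap snd ?_)
  have helim : Primrec₂ fun (p : α × List (Option ℕ)) (o : Option ℕ) =>
      (Option.casesOn o [d p.1] fun r => (l p.1).getD r [] : List ℕ) :=
    option_casesOn snd
      (list_cons.comp (hd.comp (fst.comp fst)) (const []))
      ((list_getD []).comp (hl.comp (fst.comp (fst.comp fst))) snd)
  exact helim.of_eq fun p o => by cases o <;> rfl

theorem primrecPred_enabled {t : α → CTrans k} {c : α → ℕ × List (List ℕ)} {d : α → ℕ}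
    (ht : Primrec t) (hc : Primrec c) (hd : Primrec d) :
    PrimrecPred fun a => (t a).Enabled (c a) (d a) := by
  have hmem : PrimrecRel fun a r => d a ∈ toAssignment (c a).2 r :=
    primrecPred_mem_toAssignment (hd.comp fst) (snd.comp (hc.comp fst)) snd
  exact (Primrec.eq.comp (primrec_src.comp ht) (fst.comp hc)).and <|
    (primrecPred_forall_mem (primrec_gIn.comp ht) hmem).and
      (primrecPred_forall_mem (primrec_gNin.comp ht) hmem.not)

end CTrans

namespace CRsA

theorem primrec_toProd : Primrec fun A : CRsA k => (A.nQ, A.nR, A.trans, A.I, A.F) :=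
  of_equiv (α := ℕ × ℕ × List (CTrans k) × List ℕ × List ℕ)

theorem primrec_nQ : Primrec (nQ (k := k)) :=
  fst.comp primrec_toProd

theorem primrec_nR : Primrec (nR (k := k)) :=
  (fst.comp snd).comp primrec_toProd

theorem primrec_trans : Primrec (trans (k := k)) :=
  (fst.comp (snd.comp snd)).comp primrec_toProd

theorem primrec_I : Primrec (I (k := k)) :=
  (fst.comp (snd.comp (snd.comp snd))).comp primrec_toProd

theorem primrec_F : Primrec (F (k := k)) :=
  (snd.comp (snd.comp (snd.comp snd))).comp primrec_toProd

theorem primrecPred_wellFormed : PrimrecPred (WellFormed (k := k)) := by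
  have hstate : PrimrecRel fun (A : CRsA k) q => q < A.nQ :=
    nat_lt.comp snd (primrec_nQ.comp fst)
  have hreg : PrimrecRel fun (p : CRsA k × CTrans k) r => r < p.1.nR :=
    nat_lt.comp snd (primrec_nR.comp (fst.comp fst))
  have hdisjoint : PrimrecRel fun (p : CRsA k × CTrans k) r => r ∉ p.2.gNin :=
    (primrecPred_mem snd (CTrans.primrec_gNin.comp (snd.comp fst))).not
  have hupd : PrimrecRel fun (p : CRsA k × CTrans k) (l : List (Option ℕ)) =>
      ∀ r, some r ∈ l → r < p.1.nR := by
    have hsome : Primrec fun p : (CRsA k × CTrans k) × List (Option ℕ) => p.2.reduceOption :=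
      listFilterMap snd Primrec₂.right
    have hreg' : PrimrecRel fun (p : (CRsA k × CTrans k) × List (Option ℕ)) r => r < p.1.1.nR :=
      hreg.comp (fst.comp fst) snd
    refine (primrecPred_forall_mem hsome hreg').of_eq fun p => ?_
    simp only [List.reduceOption_mem_iff]
  have htrans := (hstate.comp fst (CTrans.primrec_src.comp snd)).and <|
    (hstate.comp fst (CTrans.primrec_tgt.comp snd)).and <|
    (primrecPred_forall_mem (CTrans.primrec_gIn.comp snd) hreg).and <|
    (primrecPred_forall_mem (CTrans.primrec_gNin.comp snd) hreg).and <|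
    (primrecPred_forall_mem (CTrans.primrec_gIn.comp snd) hdisjoint).and <|
    (Primrec.eq.comp (list_length.comp (CTrans.primrec_upd.comp snd)) (primrec_nR.comp fst)).and
      (primrecPred_forall_mem (CTrans.primrec_upd.comp snd) hupd)
  exact (primrecPred_forall_mem primrec_I hstate).and <|
    (primrecPred_forall_mem primrec_F hstate).and (primrecPred_forall_mem primrec_trans htrans)

theorem primrec_post {A : α → CRsA k} {N : α → ℕ} {c : α → ℕ × List (List ℕ)}
    (hA : Primrec A) (hN : Primrec N) (hc : Primrec c) :
    Primrec fun a => (A a).post (N a) (c a) := by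
  have ht : Primrec fun p : (α × CTrans k) × ℕ => p.1.2 := snd.comp fst
  have hc : Primrec fun p : (α × CTrans k) × ℕ => c p.1.1 := hc.comp (fst.comp fst)
  exact list_flatMap (primrec_trans.comp hA) <| list_flatMap (list_range.comp (hN.comp fst)) <|
    Primrec.ite (CTrans.primrecPred_enabled ht hc snd)
      (list_cons.comp
        ((CTrans.primrec_tgt.comp ht).pair (CTrans.primrec_applyList ht (snd.comp hc) snd))
        (const []))
      (const [])

theorem primrecPred_acceptsTest {A : α → CRsA k} {N n : α → ℕ} {c : α → ℕ × List (List ℕ)}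
    (hA : Primrec A) (hN : Primrec N) (hn : Primrec n) (hc : Primrec c) :
    PrimrecPred fun a => (A a).AcceptsTest (N a) (n a) (c a) := by
  have hexplore : Primrec₂ fun a cs => (A a).explore (N a) cs :=
    list_append.comp snd <| list_flatMap snd <|
      primrec_post (hA.comp (fst.comp fst)) (hN.comp (fst.comp fst)) snd
  exact primrecPred_exists_mem (nat_iterate hn (list_cons.comp hc (const [])) hexplore)
    (primrecPred_mem (fst.comp snd) (primrec_F.comp (hA.comp fst)))

theorem primrecRel_stableTest : PrimrecRel (StableTest (k := k)) := by
  have hn : Primrec fun p : ((CRsA k × ℕ) × ℕ) × List (List ℕ) => p.1.1.2 :=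
    snd.comp (fst.comp fst)
  have hN : Primrec fun p : ((CRsA k × ℕ) × ℕ) × List (List ℕ) => 2 * (p.1.1.2 + 1) :=
    nat_mul.comp (const 2) (succ.comp hn)
  have hA : Primrec fun p : ((CRsA k × ℕ) × ℕ) × List (List ℕ) => p.1.1.1 :=
    fst.comp (fst.comp fst)
  have hc : Primrec fun p : ((CRsA k × ℕ) × ℕ) × List (List ℕ) => (p.1.2, p.2) :=
    (snd.comp fst).pair snd
  have hassignments : Primrec fun p : (CRsA k × ℕ) × ℕ => assignments p.1.1.nR (p.1.2 + 1) :=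
    primrec_assignments (primrec_nR.comp (fst.comp fst)) (succ.comp (snd.comp fst))
  refine primrecPred_forall_mem (list_range.comp (primrec_nQ.comp fst)) <|
    primrecPred_forall_mem hassignments ?_
  exact ((primrecPred_acceptsTest hA hN (succ.comp hn) hc).not.or
    (primrecPred_acceptsTest hA hN hn hc)).of_eq fun _ => imp_iff_not_or.symm

theorem primrecRel_initialTest : PrimrecRel (InitialTest (k := k)) :=
  primrecPred_exists_mem (primrec_I.comp fst) <|
    primrecPred_acceptsTest (fst.comp fst) (snd.comp fst) (snd.comp fst) (snd.pair (const []))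

end CRsA

end PrimitiveRecursion

/-- The emptiness problem for register set automata is decidable:
the set of (encodings of) RsAs with empty language is computable. -/
theorem rsa_emptiness_decidable (k : ℕ) :
    ComputablePred (fun A : CRsA (k + 1) => A.WellFormed ∧ CRsA.Lang A = ∅) := by
  have hwf : PrimrecRel fun (A : CRsA (k + 1)) (_ : ℕ) => A.WellFormed :=
    CRsA.primrecPred_wellFormed.comp Primrec.fst
  refine computablePred_of_primrecRel_search
    (S := fun A n => ¬ A.WellFormed ∨ A.StableTest n)
    (R := fun A n => A.WellFormed ∧ ¬ A.InitialTest n)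
    (hwf.not.or CRsA.primrecRel_stableTest) (hwf.and CRsA.primrecRel_initialTest.not)
    (fun A => ?_) fun A n hn => and_congr_right fun hA => ?_
  · by_cases hA : A.WellFormed
    · obtain ⟨n, hn⟩ := CRsA.exists_stable hA
      exact ⟨n, .inr ((CRsA.stableTest_iff hA).2 hn)⟩
    · exact ⟨0, .inl hA⟩
  · have hstable : A.Stable n := (CRsA.stableTest_iff hA).1 (hn.resolve_left (not_not_intro hA))
    rw [hstable.lang_eq_empty_iff hA, CRsA.initialTest_iff hA]
    push Not
    rfl
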